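/- arXiv:1902.02914 — 8 statements merged into one kernel-verified Lean document; each statement's English description precedes it below -/
import Mathlib

section
/- The polynomial G(u,v) = 4000000u⁸ − 1998092052000u⁷ − 676000000u⁶v − 71509053768117831u⁶ + 224328787434000u⁵v + 42841500000u⁴v² − 395361312253919627346u⁵ + 8460248600243212740u⁴v − 8372335651553250u³v² − 1206702250000u²v³ + 36392104317997507611465u⁴ + 31914880192757153442492u³v − 332936970436116610650u²v² + 103850637726127500uv³ + 12745792515625v⁴ − 826890695963630262273456u³ − 9875439964247275663003440u²v − 644187721569909674246640uv² + 4362752394549791982000v³ − 168880832609781468337056u² + 30826420907787244648372032uv + 474410438868202394564990304v² + 2545539129474834804480u + 6939213188282316797541120v + 960605665900794374400 is irreducible in ℚ[u,v]. -/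
section
open Polynomial
instance fact7 : Fact (Nat.Prime 7) := ⟨by norm_num⟩
lemma h7 : Irreducible (X^4+2*X^3+6*X^2+X+2 : (ZMod 7)[X]) := by
  have hm : (X^4+2*X^3+6*X^2+X+2 : (ZMod 7)[X]).natDegree = 4 := by compute_degree!
  have hmon : (X^4+2*X^3+6*X^2+X+2 : (ZMod 7)[X]).Monic := by monicity!
  rw [hmon.irreducible_iff_natDegree']
  refine ⟨fun h => by simp [h] at hm, ?_⟩
  intro q r hq hr hqr hd
  have hdeg : q.natDegree + r.natDegree = 4 := by rw [← hq.natDegree_mul hr, hqr, hm]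
  rw [hm] at hd
  simp only [Finset.mem_Ioc] at hd
  have : r.natDegree = 1 ∨ r.natDegree = 2 := by omega
  rcases this with h | h
  · have h1 : r = X + C (r.coeff 0) := by
      have := hr.as_sum
      simpa [h] using this
    have := congrArg (eval (-(r.coeff 0))) hqr
    rw [eval_mul] at this
    have h0 : eval (-(r.coeff 0)) r = 0 := by
      conv_lhs => rw [h1]
      simp
    rw [h0, mul_zero] at this
    simp at this
    revert this
    generalize r.coeff 0 = a
    revert a
    decide
  · have h2 : q.natDegree = 2 := by omega
    have hr' := hr.as_sum
    have hq' := hq.as_sum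
    rw [h] at hr'
    rw [h2] at hq'
    simp only [Finset.sum_range_succ, Finset.sum_range_zero, pow_zero, pow_one, zero_add, mul_one] at hr' hq'
    generalize r.coeff 0 = b at *
    generalize r.coeff 1 = a at *
    generalize q.coeff 0 = d at *
    generalize q.coeff 1 = e at *
    subst hr' hq'
    have key : (X^4 + C (a+e) * X^3 + C (b+d+a*e) * X^2 + C (a*d+b*e) * X + C (b*d) : (ZMod 7)[X]) = X^4+C 2*X^3+C 6*X^2+C 1 * X+ C 2 := by
      have e1 : (X^4+C 2*X^3+C 6*X^2+C 1 * X+ C 2 : (ZMod 7)[X]) = X^4+2*X^3+6*X^2+X+2 := by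
        have c2 : (C 2 : (ZMod 7)[X]) = 2 := rfl
        have c6 : (C 6 : (ZMod 7)[X]) = 6 := rfl
        rw [c2, c6, C_1, one_mul]
      rw [e1, ← hqr]
      simp only [map_add, map_mul]
      ring
    have k0 := congrArg (coeff · 0) key
    have k1 := congrArg (coeff · 1) key
    have k2 := congrArg (coeff · 2) key
    have k3 := congrArg (coeff · 3) key
    simp [coeff_X, coeff_C, -map_add, -map_mul, coeff_X_pow] at k0 k1 k2 k3
    obtain rfl : e = 2 - a := by rw [← k3]; ring
    obtain rfl : d = 6 - b - a*(2-a) := by rw [← k2]; ring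
    clear key hqr h hd hdeg hq hr h2 hm hmon k2 k3
    revert a b
    decide

def cf0 {R : Type*} [CommRing R] (t : R) : R := 4000000 * t^8 - 1998092052000 * t^7 - 71509053768117831 * t^6 - 395361312253919627346 * t^5 + 36392104317997507611465 * t^4 - 826890695963630262273456 * t^3 - 168880832609781468337056 * t^2 + 2545539129474834804480 * t^1 + 960605665900794374400
def cf1 {R : Type*} [CommRing R] (t : R) : R := -676000000 * t^6 + 224328787434000 * t^5 + 8460248600243212740 * t^4 + 31914880192757153442492 * t^3 - 9875439964247275663003440 * t^2 + 30826420907787244648372032 * t^1 + 6939213188282316797541120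
def cf2 {R : Type*} [CommRing R] (t : R) : R := 42841500000 * t^4 - 8372335651553250 * t^3 - 332936970436116610650 * t^2 - 644187721569909674246640 * t^1 + 474410438868202394564990304
def cf3 {R : Type*} [CommRing R] (t : R) : R := -1206702250000 * t^2 + 103850637726127500 * t^1 + 4362752394549791982000

def lc : ℕ := 12745792515625

lemma scale {S : Type*} [CommRing S] (k c a0 a1 a2 a3 x : S) (h : k * c = 1) :
    c * (k*x)^4 + a3 * (k*x)^3 + a2 * (k*x)^2 + a1 * (k*x) + a0 =
     k^3 * (x^4 + a3 * x^3 + c * a2 * x^2 + c^2 * a1 * x + c^3 * a0) := by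
  linear_combination (k^3*x^4 - k^2*a2*x^2 - k*a1*x*(k*c+1) - a0*(k^2*c^2+k*c+1)) * h

noncomputable def hp {R : Type*} [CommRing R] (t : R) : R[X] :=
  X^4 + C (cf3 t) * X^3 + C (lc * cf2 t) * X^2 + C (lc^2 * cf1 t) * X + C (lc^3 * cf0 t)

lemma hp_monic {R : Type*} [CommRing R] [Nontrivial R] (t : R) : (hp t).Monic := by
  unfold hp
  monicity!

lemma cf0_map {R S : Type*} [CommRing R] [CommRing S] (f : R →+* S) (t : R) :
    f (cf0 t) = cf0 (f t) := by
  simp only [cf0, map_add, map_sub, map_mul, map_neg, map_pow, map_ofNat, neg_mul]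

lemma cf1_map {R S : Type*} [CommRing R] [CommRing S] (f : R →+* S) (t : R) :
    f (cf1 t) = cf1 (f t) := by
  simp only [cf1, map_add, map_sub, map_mul, map_neg, map_pow, map_ofNat, neg_mul]

lemma cf2_map {R S : Type*} [CommRing R] [CommRing S] (f : R →+* S) (t : R) :
    f (cf2 t) = cf2 (f t) := by
  simp only [cf2, map_add, map_sub, map_mul, map_neg, map_pow, map_ofNat, neg_mul]

lemma cf3_map {R S : Type*} [CommRing R] [CommRing S] (f : R →+* S) (t : R) :
    f (cf3 t) = cf3 (f t) := by
  simp only [cf3, map_add, map_sub, map_mul, map_neg, map_pow, map_ofNat, neg_mul]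

lemma hp_map {R S : Type*} [CommRing R] [CommRing S] (f : R →+* S) (t : R) :
    (hp t).map f = hp (f t) := by
  rw [hp, hp, ← cf0_map, ← cf1_map, ← cf2_map, ← cf3_map]
  simp only [Polynomial.map_add, Polynomial.map_mul, Polynomial.map_pow, map_X, map_C, map_mul,
    map_pow, map_natCast, Polynomial.map_natCast]

lemma hp7 : Irreducible (hp (0 : ZMod 7)) := by
  have : hp (0 : ZMod 7) = X^4+2*X^3+6*X^2+X+2 := by
    have e3 : cf3 (0 : ZMod 7) = 2 := by decide +kernel
    have e2 : (lc : ZMod 7) * cf2 (0 : ZMod 7) = 6 := by decide +kernel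
    have e1 : (lc : ZMod 7)^2 * cf1 (0 : ZMod 7) = 1 := by decide +kernel
    have e0 : (lc : ZMod 7)^3 * cf0 (0 : ZMod 7) = 2 := by decide +kernel
    have c2 : (C 2 : (ZMod 7)[X]) = 2 := rfl
    have c6 : (C 6 : (ZMod 7)[X]) = 6 := rfl
    rw [hp, e3, e2, e1, e0, c2, c6, C_1, one_mul]
  rw [this]
  exact h7

lemma hpZ : Irreducible (hp (0 : ℤ)) := by
  apply (hp_monic _).irreducible_of_irreducible_map (Int.castRingHom (ZMod 7))
  rw [hp_map, map_zero]
  exact hp7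

lemma hpQ : Irreducible (hp (0 : ℚ)) := by
  have := ((hp_monic (0 : ℤ)).irreducible_iff_irreducible_map_fraction_map (K := ℚ)).1 hpZ
  rwa [hp_map, map_zero] at this

lemma hpM : Irreducible (hp (MvPolynomial.X 0 : MvPolynomial (Fin 1) ℚ)) := by
  apply (hp_monic _).irreducible_of_irreducible_map (MvPolynomial.eval (fun _ => (0:ℚ)))
  rw [hp_map, MvPolynomial.eval_X]
  exact hpQ

noncomputable def kk : MvPolynomial (Fin 1) ℚ := MvPolynomial.C ((lc : ℚ)⁻¹)

lemma kk_mul : kk * (lc : MvPolynomial (Fin 1) ℚ) = 1 := by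
  have : (lc : MvPolynomial (Fin 1) ℚ) = MvPolynomial.C (lc : ℚ) := by simp
  rw [this, kk, ← MvPolynomial.C_mul, inv_mul_cancel₀ (by norm_num [lc]), MvPolynomial.C_1]

noncomputable instance kkInv : Invertible kk := ⟨lc, by rw [mul_comm]; exact kk_mul, kk_mul⟩

noncomputable def ee : MvPolynomial (Fin 2) ℚ ≃+* (MvPolynomial (Fin 1) ℚ)[X] :=
  ((MvPolynomial.renameEquiv ℚ (Equiv.swap (0 : Fin 2) 1)).toRingEquiv.trans
    (MvPolynomial.finSuccEquiv ℚ 1).toRingEquiv).trans (algEquivCMulXAddC kk 0).toRingEquiv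

lemma ee0 : ee (MvPolynomial.X 0) = C (MvPolynomial.X 0) := by
  have : MvPolynomial.finSuccEquiv ℚ 1 (MvPolynomial.X 1) = C (MvPolynomial.X 0) :=
    MvPolynomial.finSuccEquiv_X_succ (j := 0)
  simp [ee, this]

lemma ee1 : ee (MvPolynomial.X 1) = C kk * X := by
  simp [ee, MvPolynomial.finSuccEquiv_X_zero]

lemma cf_C {R : Type*} [CommRing R] (t : R) :
    cf0 (C t) = C (cf0 t) ∧ cf1 (C t) = C (cf1 t) ∧ cf2 (C t) = C (cf2 t) ∧ cf3 (C t) = C (cf3 t) := by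
  exact ⟨(cf0_map C t).symm, (cf1_map C t).symm, (cf2_map C t).symm, (cf3_map C t).symm⟩

lemma ee_map (t v : MvPolynomial (Fin 2) ℚ) :
    ee (lc * v^4 + cf3 t * v^3 + cf2 t * v^2 + cf1 t * v + cf0 t) =
     lc * (ee v)^4 + cf3 (ee t) * (ee v)^3 + cf2 (ee t) * (ee v)^2 + cf1 (ee t) * ee v + cf0 (ee t) := by
  have h0 := cf0_map ee.toRingHom t
  have h1 := cf1_map ee.toRingHom t
  have h2 := cf2_map ee.toRingHom t
  have h3 := cf3_map ee.toRingHom t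
  simp only [RingEquiv.toRingHom_eq_coe, RingEquiv.coe_toRingHom] at h0 h1 h2 h3
  simp only [map_add, map_mul, map_pow, map_natCast, h0, h1, h2, h3]

lemma mainIrr : Irreducible ((lc : MvPolynomial (Fin 2) ℚ) * MvPolynomial.X 1^4
    + cf3 (MvPolynomial.X 0) * MvPolynomial.X 1^3 + cf2 (MvPolynomial.X 0) * MvPolynomial.X 1^2
    + cf1 (MvPolynomial.X 0) * MvPolynomial.X 1 + cf0 (MvPolynomial.X 0)) := by
  rw [← MulEquiv.irreducible_iff ee, ee_map, ee0, ee1]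
  have hk : (C kk : (MvPolynomial (Fin 1) ℚ)[X]) * (lc : (MvPolynomial (Fin 1) ℚ)[X]) = 1 := by
    rw [← C_eq_natCast, ← C_mul, kk_mul, C_1]
  rw [scale _ _ _ _ _ _ _ hk, irreducible_isUnit_mul ((IsUnit.of_mul_eq_one _ hk).pow 3)]
  obtain ⟨h0, h1, h2, h3⟩ := cf_C (MvPolynomial.X 0 : MvPolynomial (Fin 1) ℚ)
  rw [h0, h1, h2, h3]
  have := hpM
  simpa only [hp, C_mul, C_pow, C_eq_natCast] using this

end


open MvPolynomial in
/-- The polynomial `G(u,v)` (with `u = X 0`, `v = X 1`) generating the elimination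
ideal cutting out the relation between the Dixmier invariants `I₉` and `I₁₈` of the
family `C₆(r) : y³ = x(x−1)(x−r)(x−1+r)` is irreducible in `ℚ[u,v]`. -/
theorem stmt_2 :
    Irreducible
      ((4000000 : MvPolynomial (Fin 2) ℚ) * X 0^8 - 1998092052000 * X 0^7
        - 676000000 * X 0^6 * X 1 - 71509053768117831 * X 0^6
        + 224328787434000 * X 0^5 * X 1 + 42841500000 * X 0^4 * X 1^2
        - 395361312253919627346 * X 0^5 + 8460248600243212740 * X 0^4 * X 1
        - 8372335651553250 * X 0^3 * X 1^2 - 1206702250000 * X 0^2 * X 1^3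
        + 36392104317997507611465 * X 0^4 + 31914880192757153442492 * X 0^3 * X 1
        - 332936970436116610650 * X 0^2 * X 1^2 + 103850637726127500 * X 0 * X 1^3
        + 12745792515625 * X 1^4 - 826890695963630262273456 * X 0^3
        - 9875439964247275663003440 * X 0^2 * X 1
        - 644187721569909674246640 * X 0 * X 1^2
        + 4362752394549791982000 * X 1^3 - 168880832609781468337056 * X 0^2
        + 30826420907787244648372032 * X 0 * X 1
        + 474410438868202394564990304 * X 1^2 + 2545539129474834804480 * X 0
        + 6939213188282316797541120 * X 1 + 960605665900794374400) := by
  have h := mainIrr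
  simp only [lc, cf0, cf1, cf2, cf3, Nat.cast_ofNat] at h
  convert h using 1
  ring
end

section
/- Let F(x,y,z) = y³z − x(x−z)(x−rz)(x−sz) ∈ ℂ[x,y,z] for r,s ∈ ℂ. Suppose a,b ∈ ℂ with (a,b) ≠ (0,0) and there exist λ₀,λ₁,λ₂ ∈ ℂ such that F(x,y,−ax−by) = (λ₀x² + λ₁xy + λ₂y²)² as polynomials in x,y. Then r⁴s⁴a⁹ − 12(r⁴s³ + r³s⁴ + r³s³)a⁷ − 8(r⁴s³ + r³s⁴ + r⁴s² + 15r³s³ + r²s⁴ + r³s² + r²s³)a⁶ + 6(5r⁴s² − 26r³s³ + 5r²s⁴ − 26r³s² − 26r²s³ + 5r²s²)a⁵ + 24(2r⁴s² − 4r³s³ + 2r²s⁴ + 2r⁴s − 7r³s² − 7r²s³ + 2rs⁴ − 4r³s − 7r²s² − 4rs³ + 2r²s + 2rs²)a⁴ + 4(4r⁴s² − 8r³s³ + 4r²s⁴ + 17r⁴s − 17r³s² − 17r²s³ + 17rs⁴ + 4r⁴ − 17r³s − 54r²s² − 17rs³ + 4s⁴ − 8r³ − 17r²s − 17rs² − 8s³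 + 4r² + 17rs + 4s²)a³ + 24(r⁴s − r³s² − r²s³ + rs⁴ + r⁴ + r³s − 4r²s² + rs³ + s⁴ − r³ − 4r²s − 4rs² − s³ − r² + rs − s² + r + s)a² + 3(3r⁴ + 4r³s − 14r²s² + 4rs³ + 3s⁴ + 4r³ − 4r²s − 4rs² + 4s³ − 14r² − 4rs − 14s² + 4r + 4s + 3)a + 8(r³ − r²s − rs² + s³ − r² + 2rs − s² − r − s + 1) = 0. -/
theorem aux_det (c2 c1 c0 b3 b2 b1 b0 n : ℂ) (hC : c2*n^2+c1*n+c0=0)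
    (hB : b3*n^3+b2*n^2+b1*n+b0=0) :
    c2*((c2*b1-b3*c0)*(c1*b0)-(c2*b0)*(c2*b0+c1*b1-b2*c0))
    - c1*((c2*b2-b3*c1)*(c1*b0)-(c2*b0)*(c2*b1-b3*c0))
    + c0*((c2*b2-b3*c1)*(c2*b0+c1*b1-b2*c0)-(c2*b1-b3*c0)^2) = 0 := by
  linear_combination
    ((c2*b2-b3*c1)*(c2*b0+c1*b1-b2*c0)-(c2*b1-b3*c0)^2) * hC
    - (c2*(c2*b0+c1*b1-b2*c0)-c1*(c2*b1-b3*c0)) * (c2*hB - b3*n*hC)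
    + (c2*(c2*b1-b3*c0)-c1*(c2*b2-b3*c1)) * ((c2*n+c1)*hB - (b3*n^2+b2*n)*hC)


/-- If the line `ax + by + z = 0` is a bitangent of the plane quartic
`F(x,y,z) = y³z − x(x−z)(x−rz)(x−sz)` (the curve `C₃(r,s)`), i.e. the restriction
`F(x, y, −ax−by)` is the square of a quadratic form in `x, y`, then `a` satisfies
the stated degree-9 equation.  Since `ℂ` is infinite, the pointwise equality of
the polynomial functions is equivalent to the polynomial identity. -/
theorem stmt_4 (r s a b : ℂ) (hab : (a, b) ≠ (0, 0))
    (h : ∃ l0 l1 l2 : ℂ, ∀ x y : ℂ,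
      y^3 * (-a*x - b*y)
        - x * (x - (-a*x - b*y)) * (x - r*(-a*x - b*y)) * (x - s*(-a*x - b*y))
        = (l0*x^2 + l1*x*y + l2*y^2)^2) :
    r^4*s^4*a^9 - 12*(r^4*s^3 + r^3*s^4 + r^3*s^3)*a^7
    - 8*(r^4*s^3 + r^3*s^4 + r^4*s^2 + 15*r^3*s^3 + r^2*s^4 + r^3*s^2 + r^2*s^3)*a^6
    + 6*(5*r^4*s^2 - 26*r^3*s^3 + 5*r^2*s^4 - 26*r^3*s^2 - 26*r^2*s^3 + 5*r^2*s^2)*a^5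
    + 24*(2*r^4*s^2 - 4*r^3*s^3 + 2*r^2*s^4 + 2*r^4*s - 7*r^3*s^2 - 7*r^2*s^3
        + 2*r*s^4 - 4*r^3*s - 7*r^2*s^2 - 4*r*s^3 + 2*r^2*s + 2*r*s^2)*a^4
    + 4*(4*r^4*s^2 - 8*r^3*s^3 + 4*r^2*s^4 + 17*r^4*s - 17*r^3*s^2 - 17*r^2*s^3
        + 17*r*s^4 + 4*r^4 - 17*r^3*s - 54*r^2*s^2 - 17*r*s^3 + 4*s^4 - 8*r^3
        - 17*r^2*s - 17*r*s^2 - 8*s^3 + 4*r^2 + 17*r*s + 4*s^2)*a^3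
    + 24*(r^4*s - r^3*s^2 - r^2*s^3 + r*s^4 + r^4 + r^3*s - 4*r^2*s^2 + r*s^3 + s^4
        - r^3 - 4*r^2*s - 4*r*s^2 - s^3 - r^2 + r*s - s^2 + r + s)*a^2
    + 3*(3*r^4 + 4*r^3*s - 14*r^2*s^2 + 4*r*s^3 + 3*s^4 + 4*r^3 - 4*r^2*s - 4*r*s^2
        + 4*s^3 - 14*r^2 - 4*r*s - 14*s^2 + 4*r + 4*s + 3)*a
    + 8*(r^3 - r^2*s - r*s^2 + s^3 - r^2 + 2*r*s - s^2 - r - s + 1) = 0 := by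
  obtain ⟨l0, l1, l2, h⟩ := h
  have hb : b ≠ 0 := by
    intro hb
    subst hb
    have h1 := h 0 1
    have h2 := h 1 1
    have h3 := h 1 (-1)
    have h4 := h 1 2
    have h5 := h 1 0
    have hl2 : l2 = 0 := by
      have : l2^2 = 0 := by linear_combination -h1
      exact pow_eq_zero_iff (two_ne_zero) |>.1 this
    subst hl2
    have h0 : a = 0 := by
      linear_combination (1/2) * h2 - (1/6) * h4 + (1/6) * h3 - (1/2) * h5
    exact hab (by simp [h0])
  obtain ⟨t, ht⟩ : ∃ t, t = (b^3)⁻¹ := ⟨_, rfl⟩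
  obtain ⟨L0, hL0⟩ : ∃ L, L = l0 - l1*a/b + l2*a^2/b^2 := ⟨_, rfl⟩
  obtain ⟨L1, hL1⟩ : ∃ L, L = -l1/b + 2*l2*a/b^2 := ⟨_, rfl⟩
  obtain ⟨L2, hL2⟩ : ∃ L, L = l2/b^2 := ⟨_, rfl⟩
  have k : ∀ x z : ℂ, -t*(z+a*x)^3*z - x*(x-z)*(x-r*z)*(x-s*z)
      = (L0*x^2+L1*x*z+L2*z^2)^2 := by
    intro x z
    have hz : -a*x - b*(-(z+a*x)/b) = z := by field_simp; ring
    have := h x (-(z+a*x)/b)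
    rw [hz] at this
    have e1 : (-(z+a*x)/b)^3*z = -t*(z+a*x)^3*z := by rw [ht]; field_simp
    have e2 : l0*x^2+l1*x*(-(z+a*x)/b)+l2*(-(z+a*x)/b)^2 = L0*x^2+L1*x*z+L2*z^2 := by
      rw [hL0, hL1, hL2]; field_simp; ring
    rw [e1, e2] at this
    exact this
  clear h ht hL0 hL1 hL2
  have k10 := k 1 0
  have k01 := k 0 1
  have k1 := k 1 1
  have km := k 1 (-1)
  have k2 := k 1 2
  have q0 : L0^2 = -1 := by linear_combination -k10
  have q4 : L2^2 = -t := by linear_combination -k01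
  have q2 : L1^2+2*L0*L2 = -3*a^2*t-(r+s+r*s) := by
    linear_combination k10 + k01 - (1/2)*k1 - (1/2)*km
  have q3 : 2*L1*L2 = r*s - 3*a*t := by
    linear_combination (-1/6)*k2 + (1/2)*k1 + (1/6)*km + 2*k01 - (1/2)*k10
  have q1 : 2*L0*L1 = 1+r+s - a^3*t := by
    linear_combination -(1/2)*k1 + (1/2)*km - q3
  obtain ⟨n, hn⟩ : ∃ n, n = -L0*L2 := ⟨_, rfl⟩
  obtain ⟨m, hm⟩ : ∃ m, m = -L0*L1 := ⟨_, rfl⟩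
  have p4 : n^2 = t := by rw [hn]; linear_combination L2^2*q0 - q4
  have p1 : 2*m = a^3*n^2 - (1+r+s) := by rw [p4, hm]; linear_combination -q1
  have p2 : m^2+2*n = 3*a^2*n^2 + (r+s+r*s) := by
    rw [p4, hm, hn]; linear_combination L1^2*q0 - q2
  have p3 : 2*m*n = 3*a*n^2 - r*s := by
    rw [p4, hm, hn]; linear_combination 2*L1*L2*q0 - q3
  have hB : a^3*n^3 + (-3*a)*n^2 + (-(1+r+s))*n + r*s = 0 := by
    linear_combination p3 - n*p1
  have hA : a^6*n^4 - (2*(1+r+s)*a^3+12*a^2)*n^2 + 8*n + ((1+r+s)^2-4*(r+s+r*s)) = 0 := by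
    linear_combination 4*p2 - (2*m + a^3*n^2 - (1+r+s))*p1
  have hC : (-((1+r+s)*a^3+3*a^2))*n^2 + (8+3*a*(1+r+s)-r*s*a^3)*n
      + ((1+r+s)^2-4*(r+s+r*s)-3*a*(r*s)) = 0 := by
    linear_combination hA - (a^3*n+3*a)*hB
  by_cases ha : a = 0
  · subst ha
    linear_combination (1+r+s)*hC*8 + 64*hB
  · have hd := aux_det _ _ _ _ _ _ _ n hC hB
    refine (mul_eq_zero.1 (?_ : (a^3) * _ = 0)).resolve_left (pow_ne_zero _ ha)
    linear_combination (-1)*hd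
end

section
/- Let F₉(x,y,z) = y³z − x⁴ + xz³ ∈ ℂ[x,y,z]. Suppose a,b ∈ ℂ with (a,b) ≠ (0,0) and there exist λ₀,λ₁,λ₂ ∈ ℂ such that F₉(x,y,−ax−by) = (λ₀x² + λ₁xy + λ₂y²)² as polynomials in x,y. Then a⁹ − 96a⁶ + 48a³ + 64 = 0. -/
/-- If the line `ax + by + z = 0` is a bitangent of the plane quartic
`F₉(x,y,z) = y³z − x⁴ + xz³` (the curve `C₉ : y³ = x(x³−1)`), i.e. the restriction
`F₉(x, y, −ax−by)` is the square of a quadratic form in `x, y`, then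
`a⁹ − 96a⁶ + 48a³ + 64 = 0`. -/
theorem stmt_5 (a b : ℂ) (hab : (a, b) ≠ (0, 0))
    (h : ∃ l0 l1 l2 : ℂ, ∀ x y : ℂ,
      y^3 * (-a*x - b*y) - x^4 + x * (-a*x - b*y)^3
        = (l0*x^2 + l1*x*y + l2*y^2)^2) :
    a^9 - 96*a^6 + 48*a^3 + 64 = 0 := by
  obtain ⟨l, k, m, h⟩ := h
  have e0 := h 1 0
  have e1 := h 0 1
  have e2 := h 1 1
  have e3 := h 1 (-1)
  have e4 := h 2 1
  have c0 : -1 - a^3 = l^2 := by linear_combination e0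
  have c4 : -b = m^2 := by linear_combination e1
  have c2 : -3*a*b^2 = k^2 + 2*l*m := by linear_combination (e2+e3)/2 - e0 - e1
  have c13 : -3*a^2*b - a - b^3 = 2*l*k + 2*k*m := by linear_combination (e2-e3)/2
  have c1 : -3*a^2*b = 2*l*k := by
    linear_combination (e4 - 16*c0 - 4*c2 - c4 - 2*c13)/6
  have c3 : -a - b^3 = 2*k*m := by linear_combination c13 - c1
  have hm : m ≠ 0 := by
    rintro rfl
    have hb : b = 0 := by linear_combination -c4
    subst hb
    exact hab (by rw [show a = 0 by linear_combination -c3])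
  have hb : b = -m^2 := by linear_combination -c4
  subst hb
  clear h e0 e1 e2 e3 e4 c13 c4
  have hk : 2*m*k = m^6 - a := by linear_combination -c3
  have ha : a ≠ 0 := by
    rintro rfl
    have hk' : k = 0 ∨ l = 0 := by
      have : l*k = 0 := by linear_combination -c1/2
      exact (mul_eq_zero.mp this).symm
    rcases hk' with r | r
    · subst r
      exact hm (by simpa using hk.symm)
    · subst r
      norm_num at c0
  obtain ⟨s, hs⟩ : ∃ s, m^6 = a*s := ⟨m^6/a, by field_simp⟩
  have hk2 : 2*m*k = a*(s-1) := by linear_combination hk + hs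
  have hl : 8*m^3*l = -a^2*(s^2+10*s+1) := by
    linear_combination -4*m^2*c2 - 12*a*hs - (2*m*k + a*(s-1))*hk2
  have hc : s^3+9*s^2+15*s-1 = 0 := by
    have : a^3*(s^3+9*s^2+15*s-1) = 0 := by
      linear_combination 8*m^4*c1 - 24*a^2*hs + 2*m*k*hl - a^2*(s^2+10*s+1)*hk2
    simpa [ha] using this
  have hA : a^3*((s^2+10*s+1)^2+64*s) + 64*s = 0 := by
    have : a*(a^3*((s^2+10*s+1)^2+64*s) + 64*s) = 0 := by
      linear_combination -64*m^6*c0 - 64*(1+a^3)*hs - (8*m^3*l - a^2*(s^2+10*s+1))*hl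
    simpa [ha] using this
  have hs0 : s ≠ 0 := by
    rintro rfl
    norm_num at hc
  have hQ : a^3*(3*s^2+24*s+25) = -16 := by
    have : s*(a^3*(3*s^2+24*s+25) + 16) = 0 := by
      linear_combination hA/4 - a^3*(s/4+11/4-3)*hc
    have := (mul_eq_zero.mp this).resolve_left hs0
    linear_combination this
  have hN : (3*s^2+24*s+25)^3 - 12*(3*s^2+24*s+25)^2 - 384*(3*s^2+24*s+25) - 64 = 0 := by
    linear_combination ((1539)*s^0+(1701)*s^1+(405)*s^2+(27)*s^3)*hc
  generalize 3*s^2+24*s+25 = q at hQ hN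
  linear_combination (-1/64)*(a^9*hN - ((a^3*q)^2 - 16*(a^3*q) + 256 - 12*a^3*(a^3*q-16) - 384*a^6)*hQ)
end

section
/- Let F₉(x,y,z) = y³z − x⁴ + xz³ ∈ ℂ[x,y,z]. Suppose a,b ∈ ℂ with (a,b) ≠ (0,0) and there exist λ₀,λ₁,λ₂ ∈ ℂ such that F₉(x,y,−ax−by) = (λ₀x² + λ₁xy + λ₂y²)² as polynomials in x,y. Then b²⁷ − 29496b¹⁸ + 401808b⁹ − 64 = 0. -/
/-- If the line `ax + by + z = 0` is a bitangent of the plane quartic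
`F₉(x,y,z) = y³z − x⁴ + xz³` (the curve `C₉ : y³ = x(x³−1)`), i.e. the restriction
`F₉(x, y, −ax−by)` is the square of a quadratic form in `x, y`, then
`b²⁷ − 29496b¹⁸ + 401808b⁹ − 64 = 0`. -/
theorem stmt_6 (a b : ℂ) (hab : (a, b) ≠ (0, 0))
    (h : ∃ l0 l1 l2 : ℂ, ∀ x y : ℂ,
      y^3 * (-a*x - b*y) - x^4 + x * (-a*x - b*y)^3
        = (l0*x^2 + l1*x*y + l2*y^2)^2) :
    b^27 - 29496*b^18 + 401808*b^9 - 64 = 0 := by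
  obtain ⟨l0, l1, l2, h⟩ := h
  have e0 := h 0 1
  have e4 := h 1 0
  have p1 := h 1 1
  have m1 := h 1 (-1)
  have p2 := h 1 2
  have hb : b = -l2^2 := by linear_combination -e0
  have c4 : -1 - a^3 = l0^2 := by linear_combination e4
  have c2 : -3*a*b^2 = l1^2 + 2*l0*l2 := by
    linear_combination (p1 + m1)/2 - e0 - e4
  have c1 : -3*a^2*b = 2*l0*l1 := by
    linear_combination (4*(p1-m1) - (p2 - e4 - 4*c2 - 16*e0))/6
  have c3 : -a - b^3 = 2*l1*l2 := by
    linear_combination (p1 - m1)/2 - c1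
  have hs : l2 ≠ 0 := by
    intro h0
    have hb0 : b = 0 := by rw [hb, h0]; ring
    have ha0 : a = 0 := by
      rw [h0, hb0] at c3
      linear_combination -c3
    exact hab (by rw [ha0, hb0])
  obtain ⟨u, hu⟩ : ∃ u, a = l2^6*u := ⟨a / l2^6, by field_simp⟩
  subst hu
  subst hb
  have k1 : l1 = l2^5*(1-u)/2 := by
    apply mul_left_cancel₀ hs
    linear_combination -c3/2
  subst k1
  have k0 : l0 = -(l2^9*(u^2+10*u+1)/8) := by
    apply mul_left_cancel₀ hs
    linear_combination -c2/2
  subst k0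
  have hc : u^3 - 15*u^2 - 9*u - 1 = 0 := by
    apply mul_left_cancel₀ (pow_ne_zero 14 hs)
    linear_combination -8*c1
  have hN : (-l2^2)^9 * (1596*u^2+912*u+100) = 64 := by
    linear_combination 64*c4 + l2^18*(u+99)*hc
  have hg : (1596*u^2+912*u+100)^3 - 401808*(1596*u^2+912*u+100)^2 + 1887744*(1596*u^2+912*u+100) - 4096 = 0 := by
    linear_combination ((3828309696)*u^0+(37086009408)*u^1+(67949534016)*u^2+(4065356736)*u^3)*hc
  generalize 1596*u^2+912*u+100 = N at hN hg
  have hB : ((-l2^2)^9)^3 - 29496*((-l2^2)^9)^2 + 401808*(-l2^2)^9 - 64 = 0 := by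
    generalize (-l2^2)^9 = B at hN
    linear_combination (-B^3*hg + ((B*N)^2+64*(B*N)+4096 - 401808*B*(B*N+64) + 1887744*B^2)*hN)/4096
  linear_combination hB
end

section
/- Let F(x,y,z) = y³z − x(x−z)(x−rz)(x−sz) ∈ ℂ[x,y,z] for r,s ∈ ℂ. Suppose b ∈ ℂ satisfies one of the following three conditions: (i) r − s = 1 and s²b³ = 4; (ii) r + s = 1 and s²(s−1)²b³ = 4; (iii) r − s = −1 and (s−1)²b³ = 4. Then there exist λ₀,λ₁,λ₂ ∈ ℂ such that F(x,y,−by) = (λ₀x² + λ₁xy + λ₂y²)² as polynomials in x,y; that is, the horizontal line by + z = 0 is a bitangent of the quartic F = 0. -/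
/-- If `b` satisfies one of the three stated conditions, then the horizontal line
`by + z = 0` is a bitangent of the plane quartic
`F(x,y,z) = y³z − x(x−z)(x−rz)(x−sz)` (the curve `C₃(r,s)`), i.e. the restriction
`F(x, y, −by)` is the square of a quadratic form in `x, y`. -/
theorem stmt_8 (r s b : ℂ)
    (h : (r - s = 1 ∧ s^2 * b^3 = 4) ∨
         (r + s = 1 ∧ s^2 * (s - 1)^2 * b^3 = 4) ∨
         (r - s = -1 ∧ (s - 1)^2 * b^3 = 4)) :
    ∃ l0 l1 l2 : ℂ, ∀ x y : ℂ,
      y^3 * (-b*y) - x * (x - (-b*y)) * (x - r*(-b*y)) * (x - s*(-b*y))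
        = (l0*x^2 + l1*x*y + l2*y^2)^2 := by
  have hI : Complex.I ^ 2 = -1 := Complex.I_sq
  rcases h with ⟨h1, h2⟩ | ⟨h1, h2⟩ | ⟨h1, h2⟩
  · obtain rfl : r = s + 1 := by linear_combination h1
    refine ⟨Complex.I, Complex.I * ((s + 1) * b), Complex.I * (s * b^2 / 2), fun x y => ?_⟩
    linear_combination (b * y^4 / 4) * h2
      - (x^2 + (s + 1) * b * x * y + s * b^2 / 2 * y^2)^2 * hI
  · obtain rfl : r = 1 - s := by linear_combination h1
    refine ⟨Complex.I, Complex.I * b, Complex.I * ((1 - s) * s * b^2 / 2), fun x y => ?_⟩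
    linear_combination (b * y^4 / 4) * h2
      - (x^2 + b * x * y + (1 - s) * s * b^2 / 2 * y^2)^2 * hI
  · obtain rfl : r = s - 1 := by linear_combination h1
    refine ⟨Complex.I, Complex.I * (s * b), Complex.I * ((s - 1) * b^2 / 2), fun x y => ?_⟩
    linear_combination (b * y^4 / 4) * h2
      - (x^2 + s * b * x * y + (s - 1) * b^2 / 2 * y^2)^2 * hI
end

section
/- Let F(x,y,z) = y³z − x(x−z)(x−rz)(x−sz) ∈ ℂ[x,y,z] for r,s ∈ ℂ. Suppose b ∈ ℂ, b ≠ 0, and there exist λ₀,λ₁,λ₂ ∈ ℂ such that F(x,y,−by) = (λ₀x² + λ₁xy + λ₂y²)² as polynomials in x,y. Then one of the following three conditions holds: (i) r − s = 1 and s²b³ = 4; (ii) r + s = 1 and s²(s−1)²b³ = 4; (iii) r − s = −1 and (s−1)²b³ = 4. -/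
/-- If the horizontal line `by + z = 0` with `b ≠ 0` is a bitangent of the plane
quartic `F(x,y,z) = y³z − x(x−z)(x−rz)(x−sz)` (the curve `C₃(r,s)`), i.e. the
restriction `F(x, y, −by)` is the square of a quadratic form in `x, y`, then one
of the three stated conditions holds. -/
theorem stmt_9 (r s b : ℂ) (hb : b ≠ 0)
    (h : ∃ l0 l1 l2 : ℂ, ∀ x y : ℂ,
      y^3 * (-b*y) - x * (x - (-b*y)) * (x - r*(-b*y)) * (x - s*(-b*y))
        = (l0*x^2 + l1*x*y + l2*y^2)^2) :
    (r - s = 1 ∧ s^2 * b^3 = 4) ∨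
    (r + s = 1 ∧ s^2 * (s - 1)^2 * b^3 = 4) ∨
    (r - s = -1 ∧ (s - 1)^2 * b^3 = 4) := by
  obtain ⟨l0, l1, l2, h⟩ := h
  have e1 := h 1 0
  have e2 := h 0 1
  have e3 := h 1 1
  have e4 := h 1 (-1)
  have e5 := h 2 1
  have c0 : l0^2 = -1 := by linear_combination -e1
  have c4 : l2^2 = -b := by linear_combination -e2
  have c2 : l1^2 + 2*l0*l2 = -b^2*(r+s+r*s) := by
    linear_combination -(e3+e4)/2 + e1 + e2
  have c13 : 2*l0*l1 + 2*l1*l2 = -b*(1+r+s) - b^3*(r*s) := by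
    linear_combination -(e3-e4)/2
  have c13b : 16*l0*l1 + 4*l1*l2 = -8*b*(1+r+s) - 2*b^3*(r*s) := by
    linear_combination -e5 + 16*e1 + e2 - 4*c2
  have c1 : 2*l0*l1 = -b*(1+r+s) := by linear_combination (c13b - 2*c13)/6
  have c3 : 2*l1*l2 = -b^3*(r*s) := by linear_combination c13 - c1
  obtain ⟨m, hm⟩ : ∃ m, m = -l0*l1 := ⟨_, rfl⟩
  obtain ⟨n, hn⟩ : ∃ n, n = -l0*l2 := ⟨_, rfl⟩
  have d1 : m = b*(1+r+s)/2 := by rw [hm]; linear_combination -c1/2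
  have d2 : m^2 + 2*n = b^2*(r+s+r*s) := by
    rw [hm, hn]; linear_combination l1^2*c0 - c2
  have d3 : 2*m*n = b^3*(r*s) := by
    rw [hm, hn]; linear_combination 2*l1*l2*c0 - c3
  have d4 : n^2 = b := by rw [hn]; linear_combination l2^2*c0 - c4
  have d5 : n = (b^2*(r+s+r*s) - (b*(1+r+s)/2)^2)/2 := by
    rw [← d1]; linear_combination d2/2
  have key : b^3*((r+s-1)*((1+s-r)*(1+r-s))) = 0 := by
    rw [d5, d1] at d3
    linear_combination 8*d3
  have key2 := (mul_eq_zero.mp key).resolve_left (pow_ne_zero 3 hb)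
  rw [d5] at d4
  rcases mul_eq_zero.mp key2 with k | k
  · right; left
    have hr : r = 1 - s := by linear_combination k
    subst hr
    refine ⟨by ring, mul_left_cancel₀ hb ?_⟩
    linear_combination 4*d4
  rcases mul_eq_zero.mp k with k | k
  · left
    have hr : r = 1 + s := by linear_combination -k
    subst hr
    refine ⟨by ring, mul_left_cancel₀ hb ?_⟩
    linear_combination 4*d4
  · right; right
    have hr : r = s - 1 := by linear_combination k
    subst hr
    refine ⟨by ring, mul_left_cancel₀ hb ?_⟩
    linear_combination 4*d4
end

section
/- Let b,c,d,e ∈ ℂ with (ce + bd)² + (bc + de)² ≠ 0. Then there exist a, f ∈ ℂ such that a² + b² + c² + d² + e² + f² = 0 and abc + ade + bdf + cef = 0. -/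
/-- If `(ce + bd)² + (bc + de)² ≠ 0`, the equations
`a² + b² + c² + d² + e² + f² = 0` and `abc + ade + bdf + cef = 0` of the
determinantal-representation system admit a solution in `a` and `f`. -/
theorem stmt_17 (b c d e : ℂ) (h : (c*e + b*d)^2 + (b*c + d*e)^2 ≠ 0) :
    ∃ a f : ℂ,
      a^2 + b^2 + c^2 + d^2 + e^2 + f^2 = 0 ∧
      a*b*c + a*d*e + b*d*f + c*e*f = 0 := by
  obtain ⟨t, ht⟩ := IsAlgClosed.exists_pow_nat_eq
    (-(b^2 + c^2 + d^2 + e^2) / ((c*e + b*d)^2 + (b*c + d*e)^2)) (n := 2) (by norm_num)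
  rw [eq_div_iff h] at ht
  refine ⟨-(c*e + b*d) * t, (b*c + d*e) * t, ?_, ?_⟩
  · linear_combination ht
  · ring
end

section
/- Let r,s,a,b,c,f ∈ ℂ with r ≠ 0, s ≠ 0, b ≠ 0, c ≠ 0, and s = 1 − r. Suppose a²rs + b²s + c²r = 0, 2abc(s−r) − 2bcf − 1 = 0, a² + f² + 2(b² + c²) = 0, and af = (b + ic)² (where i² = −1). Then 4(b²s + c²r) − 2(s−r)(b + ic)² − 2(b² + c²) = 1/(4b²c²). -/
/-- Under the reduced system (with `e = b`, `d = −c`, `s = 1 − r`) for the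
determinantal representation of `C₆`, the degree-6 relation
`4(b²s + c²r) − 2(s−r)(b + ic)² − 2(b² + c²) = 1/(4b²c²)` holds. -/
theorem stmt_18 (r s a b c f : ℂ)
    (hr : r ≠ 0) (hs : s ≠ 0) (hb : b ≠ 0) (hc : c ≠ 0) (hrs : s = 1 - r)
    (h1 : a^2*r*s + b^2*s + c^2*r = 0)
    (h2 : 2*a*b*c*(s - r) - 2*b*c*f - 1 = 0)
    (h3 : a^2 + f^2 + 2*(b^2 + c^2) = 0)
    (h4 : a*f = (b + Complex.I*c)^2) :
    4*(b^2*s + c^2*r) - 2*(s - r)*(b + Complex.I*c)^2 - 2*(b^2 + c^2)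
      = 1/(4*b^2*c^2) := by
  have key : 4*(b^2*s + c^2*r) - 2*(s - r)*(b + Complex.I*c)^2 - 2*(b^2 + c^2)
      = (a*(s - r) - f)^2 := by
    subst hrs
    linear_combination 4*h1 - h3 + 2*(1 - r - r)*h4
  have h5 : 2*b*c*(a*(s - r) - f) = 1 := by linear_combination h2
  have hbc : 4*b^2*c^2 ≠ 0 := by simp [hb, hc]
  rw [key, eq_div_iff hbc]
  linear_combination (2*b*c*(a*(s - r) - f) + 1)*h5
end
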